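/- Let α, β, γ ∈ Φ with (α,β) = 1, (β,γ) = 1 and (α,γ) = 0, and suppose there is a simple root α_i that occurs with coefficient exactly 1 in the expansion of each of α, β, γ as a linear combination of simple roots. Then δ := α − β + γ is a root, α_i occurs with coefficient exactly 1 in the expansion of δ, and δ ∈ Φ⁺. -/

import Mathlib

open scoped RealInnerProductSpace

/-- In a simply laced root system with a fixed system of positive roots and simple
roots `simple 0, …, simple (r-1)`, if `(α,β) = 1`, `(β,γ) = 1`, `(α,γ) = 0` and some
simple root `simple i` occurs with coefficient exactly `1` in the expansions of each
of `α`, `β`, `γ`, then `δ = α - β + γ` is a root, `simple i` occurs with coefficient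
exactly `1` in the expansion of `δ`, and `δ` is a positive root. -/
theorem rhombus_positive {V : Type*} [NormedAddCommGroup V] [InnerProductSpace ℝ V]
    [FiniteDimensional ℝ V]
    (Φ : Finset V)
    (hΦ0 : (0 : V) ∉ Φ)
    (hrefl : ∀ α ∈ Φ, ∀ β ∈ Φ, β - ⟪α, β⟫ • α ∈ Φ)
    (hred : ∀ α ∈ Φ, ∀ c : ℝ, c • α ∈ Φ → c = 1 ∨ c = -1)
    (hcrys : ∀ α ∈ Φ, ∀ β ∈ Φ, ∃ n : ℤ, ⟪α, β⟫ = (n : ℝ))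
    (hnorm : ∀ α ∈ Φ, ⟪α, α⟫ = 2)
    (Φpos : Finset V) (hpos : Φpos ⊆ Φ)
    (hsplit : ∀ α ∈ Φ, (α ∈ Φpos ↔ -α ∉ Φpos))
    (r : ℕ) (simple : Fin r → V)
    (hsmem : ∀ i, simple i ∈ Φpos)
    (hsind : LinearIndependent ℝ simple)
    (hsspan : ∀ α ∈ Φpos, ∃ c : Fin r → ℕ, α = ∑ j, (c j : ℝ) • simple j)
    (α β γ : V) (hα : α ∈ Φ) (hβ : β ∈ Φ) (hγ : γ ∈ Φ)
    (hab : ⟪α, β⟫ = 1) (hbc : ⟪β, γ⟫ = 1) (hac : ⟪α, γ⟫ = 0)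
    (i : Fin r)
    (hcα : ∃ c : Fin r → ℤ, α = ∑ j, (c j : ℝ) • simple j ∧ c i = 1)
    (hcβ : ∃ c : Fin r → ℤ, β = ∑ j, (c j : ℝ) • simple j ∧ c i = 1)
    (hcγ : ∃ c : Fin r → ℤ, γ = ∑ j, (c j : ℝ) • simple j ∧ c i = 1) :
    α - β + γ ∈ Φ ∧
      (∃ c : Fin r → ℤ, α - β + γ = ∑ j, (c j : ℝ) • simple j ∧ c i = 1) ∧
      α - β + γ ∈ Φpos := by
  have h1 : α - β ∈ Φ := by
    have h := hrefl β hβ α hα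
    rw [real_inner_comm, hab, one_smul] at h
    exact h
  have h2 : α - β + γ ∈ Φ := by
    have h := hrefl γ hγ _ h1
    rw [inner_sub_right, real_inner_comm, hac, real_inner_comm, hbc] at h
    simpa using h
  obtain ⟨a, ha, hai⟩ := hcα
  obtain ⟨b, hb, hbi⟩ := hcβ
  obtain ⟨c, hc, hci⟩ := hcγ
  have h3 : α - β + γ = ∑ j, ((a j - b j + c j : ℤ) : ℝ) • simple j := by
    rw [ha, hb, hc, ← Finset.sum_sub_distrib, ← Finset.sum_add_distrib]
    refine Finset.sum_congr rfl fun j _ => ?_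
    push_cast
    rw [add_smul, sub_smul]
  refine ⟨h2, ⟨fun j => a j - b j + c j, h3, by simp [hai, hbi, hci]⟩, ?_⟩
  rw [hsplit _ h2]
  intro h
  obtain ⟨d, hd⟩ := hsspan _ h
  have h4 : ∑ j, ((d j : ℝ) + ((a j - b j + c j : ℤ) : ℝ)) • simple j = 0 := by
    simp only [add_smul, Finset.sum_add_distrib]
    rw [← hd, ← h3]
    exact neg_add_cancel _
  have h5 := Fintype.linearIndependent_iff.mp hsind _ h4 i
  rw [hai, hbi, hci] at h5
  have h6 : (0 : ℝ) ≤ d i := Nat.cast_nonneg _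
  norm_num at h5
  linarith
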